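/- Fix r ∈ [1,2). Let X be a random variable with C_𝕍(|X|^r) < ∞, and let (X_j) satisfy 𝕍(|X_j| ≥ x) ≤ C·𝕍(|X| ≥ x) for all x ≥ 0 and j ≥ 1 (C a constant). Define truncations Y_j = (−j^{1/r}) ∨ X_j ∧ j^{1/r}. Then Σ_{j=1}^∞ 𝔼[Y_j²]/j^{2/r} < ∞; in fact Σ_{j=1}^∞ 𝔼[Y_j²]/j^{2/r} ≤ (1+4C)·Σ_{j=1}^∞ j^{−2/r} + (8rC/(2−r))·C_𝕍(|X|^r). -/

import Mathlib

open MeasureTheory Set Filter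

/-!
Write `g t = 𝕍(|X|^r ≥ t)`. For `0 < t ≤ 1` the event `|Y_j|^p / j^(p/r) ≥ t` is
`|X_j|^r ≥ j * t^(r/p)`, because truncation at level `j^(1/r)` does not change it. The layer cake
formula therefore gives `𝔼[|Y_j|^p] / j^(p/r) ≤ C * ∫₀¹ g (j * t^(r/p)) dt`. As `g` is antitone,
`∑_j g (j * s) ≤ s⁻¹ * ∫₀^∞ g`, and summing under the integral leaves
`C * C_𝕍(|X|^r) * ∫₀¹ t^(-r/p) dt = p * C / (p - r) * C_𝕍(|X|^r)`. For `p = 2` and `1 ≤ r` this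
is at most the second term of the claimed bound.
-/

section Antitone

variable {g : ℝ → ℝ}

lemma sum_antitone_mul_le_integral (hg : Antitone g) (hg₀ : ∀ t, 0 ≤ g t)
    (hint : IntegrableOn g (Ioi 0)) {s : ℝ} (hs : 0 < s) (N : ℕ) :
    ∑ n ∈ Finset.range N, g ((n + 1) * s) ≤ s⁻¹ * ∫ t in Ioi 0, g t := by
  have hgs : Antitone fun t ↦ g (t * s) := fun a b hab ↦ hg (by gcongr)
  calc ∑ n ∈ Finset.range N, g ((n + 1) * s)
      ≤ ∫ t in (0 : ℝ)..N, g (t * s) := by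
        simpa using (hgs.antitoneOn (Icc (0 : ℝ) (0 + N))).sum_le_integral
    _ = ∫ t in Ioc (0 : ℝ) N, g (t * s) := intervalIntegral.integral_of_le N.cast_nonneg
    _ ≤ ∫ t in Ioi 0, g (t * s) :=
        setIntegral_mono_set
          ((integrableOn_Ioi_comp_mul_right_iff g 0 hs).2 (by rwa [zero_mul]))
          (ae_of_all _ fun t ↦ hg₀ _) Ioc_subset_Ioi_self.eventuallyLE
    _ = s⁻¹ * ∫ t in Ioi 0, g t := by
        rw [integral_comp_mul_right_Ioi g 0 hs, zero_mul, smul_eq_mul]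

lemma integrableOn_Ioc_antitone_comp_mul_rpow (hg : Antitone g) {y α : ℝ} (hy : 0 ≤ y)
    (hα : 0 ≤ α) : IntegrableOn (fun t : ℝ ↦ g (y * t ^ α)) (Ioc 0 1) := by
  have hanti : AntitoneOn (fun t : ℝ ↦ g (y * t ^ α)) (Icc 0 1) := fun a ha b _ hab ↦
    hg (mul_le_mul_of_nonneg_left (Real.rpow_le_rpow ha.1 hab hα) hy)
  exact (hanti.integrableOn_isCompact isCompact_Icc).mono_set Ioc_subset_Icc_self

lemma sum_integral_antitone_comp_mul_rpow_le (hg : Antitone g) (hg₀ : ∀ t, 0 ≤ g t)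
    (hint : IntegrableOn g (Ioi 0)) {α : ℝ} (hα₀ : 0 ≤ α) (hα₁ : α < 1) (N : ℕ) :
    ∑ n ∈ Finset.range N, ∫ t in Ioc (0 : ℝ) 1, g ((n + 1) * t ^ α) ≤
      (1 - α)⁻¹ * ∫ t in Ioi 0, g t := by
  have hterm (n : ℕ) : IntegrableOn (fun t : ℝ ↦ g ((n + 1) * t ^ α)) (Ioc 0 1) :=
    integrableOn_Ioc_antitone_comp_mul_rpow hg (by positivity) hα₀
  have hpow : IntegrableOn (fun t : ℝ ↦ t ^ (-α)) (Ioc 0 1) :=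
    (intervalIntegrable_iff_integrableOn_Ioc_of_le zero_le_one).1
      (intervalIntegral.intervalIntegrable_rpow' (by linarith))
  calc ∑ n ∈ Finset.range N, ∫ t in Ioc (0 : ℝ) 1, g ((n + 1) * t ^ α)
      = ∫ t in Ioc (0 : ℝ) 1, ∑ n ∈ Finset.range N, g ((n + 1) * t ^ α) :=
        (integral_finsetSum _ fun n _ ↦ hterm n).symm
    _ ≤ ∫ t in Ioc (0 : ℝ) 1, t ^ (-α) * ∫ u in Ioi 0, g u := by
        refine setIntegral_mono_on (integrable_finsetSum _ fun n _ ↦ hterm n)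
          (hpow.mul_const _) measurableSet_Ioc fun t ht ↦ ?_
        rw [Real.rpow_neg ht.1.le]
        exact sum_antitone_mul_le_integral hg hg₀ hint (Real.rpow_pos_of_pos ht.1 α) N
    _ = (1 - α)⁻¹ * ∫ u in Ioi 0, g u := by
        rw [integral_mul_const, ← intervalIntegral.integral_of_le zero_le_one,
          integral_rpow (Or.inl (by linarith)), Real.one_rpow,
          Real.zero_rpow (by linarith), sub_zero, one_div, neg_add_eq_sub]

end Antitone

section UpperExpectation

variable {Ω : Type*} [MeasurableSpace Ω]

/-- The upper expectation `𝔼[f] = sup_{P ∈ 𝒫₀} E_P[f]` of a function `f ≥ 0`. The measures outside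
`𝒫₀` contribute an empty supremum `0`, so a negative `𝔼[f]` is replaced by `0`; the value is also
`0` when the expectations are unbounded above. -/
noncomputable def upperExp (𝒫₀ : Set (Measure Ω)) (f : Ω → ℝ) : ℝ :=
  ⨆ P ∈ 𝒫₀, ∫ ω, f ω ∂P

/-- The upper probability `𝕍(A) = sup_{P ∈ 𝒫₀} P(A)`. -/
noncomputable def upperProb (𝒫₀ : Set (Measure Ω)) (A : Set Ω) : ℝ :=
  ⨆ P ∈ 𝒫₀, (P A).toReal

/-- The Choquet integral `C_𝕍(f) = ∫₀^∞ 𝕍(f ≥ t) dt` of a nonnegative function `f`. -/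
noncomputable def choquetIntegral (𝒫₀ : Set (Measure Ω)) (f : Ω → ℝ) : ℝ :=
  ∫ t in Ioi (0 : ℝ), upperProb 𝒫₀ {ω | t ≤ f ω}

variable {𝒫₀ : Set (Measure Ω)}

lemma upperExp_nonneg {f : Ω → ℝ} (hf : ∀ ω, 0 ≤ f ω) : 0 ≤ upperExp 𝒫₀ f :=
  Real.iSup_nonneg fun _ ↦ Real.iSup_nonneg fun _ ↦ integral_nonneg hf

lemma upperExp_le {f : Ω → ℝ} {b : ℝ} (hb : 0 ≤ b) (h : ∀ P ∈ 𝒫₀, ∫ ω, f ω ∂P ≤ b) :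
    upperExp 𝒫₀ f ≤ b :=
  Real.iSup_le (fun P ↦ Real.iSup_le (h P) hb) hb

lemma upperExp_div (f : Ω → ℝ) {c : ℝ} (hc : 0 ≤ c) :
    upperExp 𝒫₀ (fun ω ↦ f ω / c) = upperExp 𝒫₀ f / c := by
  simp_rw [upperExp, integral_div, div_eq_mul_inv, Real.iSup_mul_of_nonneg (inv_nonneg.2 hc)]

lemma upperProb_nonneg (A : Set Ω) : 0 ≤ upperProb 𝒫₀ A :=
  Real.iSup_nonneg fun _ ↦ Real.iSup_nonneg fun _ ↦ ENNReal.toReal_nonneg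

lemma choquetIntegral_nonneg (f : Ω → ℝ) : 0 ≤ choquetIntegral 𝒫₀ f :=
  integral_nonneg fun _ ↦ upperProb_nonneg _

lemma measureReal_le_upperProb (hprob : ∀ P ∈ 𝒫₀, IsProbabilityMeasure P) {P : Measure Ω}
    (hP : P ∈ 𝒫₀) (A : Set Ω) : P.real A ≤ upperProb 𝒫₀ A := by
  refine le_ciSup₂ (f := fun Q (_ : Q ∈ 𝒫₀) ↦ Q.real A) ⟨1, ?_⟩ P hP
  simp only [mem_upperBounds, mem_iUnion, mem_range, forall_exists_index]
  rintro _ Q hQ rfl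
  have := hprob Q hQ
  exact measureReal_le_one

lemma upperProb_mono (hprob : ∀ P ∈ 𝒫₀, IsProbabilityMeasure P) {A B : Set Ω} (hAB : A ⊆ B) :
    upperProb 𝒫₀ A ≤ upperProb 𝒫₀ B := by
  refine Real.iSup_le (fun P ↦ Real.iSup_le (fun hP ↦ ?_) (upperProb_nonneg B))
    (upperProb_nonneg B)
  have := hprob P hP
  exact (measureReal_mono hAB).trans (measureReal_le_upperProb hprob hP B)

lemma antitone_upperProb_ge (hprob : ∀ P ∈ 𝒫₀, IsProbabilityMeasure P) (f : Ω → ℝ) :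
    Antitone fun t ↦ upperProb 𝒫₀ {ω | t ≤ f ω} := fun _ _ hst ↦
  upperProb_mono hprob fun _ hω ↦ hst.trans hω

lemma upperExp_le_integral_upperProb (hprob : ∀ P ∈ 𝒫₀, IsProbabilityMeasure P) {f : Ω → ℝ}
    (hf : Measurable f) {M : ℝ} (hf₀ : ∀ ω, 0 ≤ f ω) (hfM : ∀ ω, f ω ≤ M) :
    upperExp 𝒫₀ f ≤ ∫ t in Ioc 0 M, upperProb 𝒫₀ {ω | t ≤ f ω} := by
  refine upperExp_le (integral_nonneg fun _ ↦ upperProb_nonneg _) fun P hP ↦ ?_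
  have := hprob P hP
  have hfP : Integrable f P := .of_bound hf.aestronglyMeasurable M <|
    ae_of_all _ fun ω ↦ by rw [Real.norm_of_nonneg (hf₀ ω)]; exact hfM ω
  rw [hfP.integral_eq_integral_Ioc_meas_le (ae_of_all _ hf₀) (ae_of_all _ hfM)]
  have hPanti : Antitone fun t ↦ P.real {ω | t ≤ f ω} := fun _ _ hst ↦
    measureReal_mono fun _ hω ↦ hst.trans hω
  have hint {g : ℝ → ℝ} (hg : Antitone g) : IntegrableOn g (Ioc 0 M) :=
    ((hg.antitoneOn _).integrableOn_isCompact isCompact_Icc).mono_set Ioc_subset_Icc_self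
  exact integral_mono (hint hPanti) (hint (antitone_upperProb_ge hprob f)) fun t ↦
    measureReal_le_upperProb hprob hP _

end UpperExpectation

section Clamp

/-- The two-sided truncation `(-b) ∨ x ∧ b` of the number `x` at level `b ≥ 0`, so that
`Y_j = clamp (j ^ (1 / r)) X_j`. -/
noncomputable def clamp (b x : ℝ) : ℝ := max (-b) (min x b)

lemma abs_clamp {b : ℝ} (hb : 0 ≤ b) (x : ℝ) : |clamp b x| = min |x| b := by
  unfold clamp
  grind

lemma measurable_clamp (b : ℝ) : Measurable (clamp b) :=
  measurable_const.max (measurable_id.min measurable_const)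

lemma abs_clamp_rpow_div_eq {y p r : ℝ} (hy : 0 < y) (hr : 0 < r) (x : ℝ) :
    |clamp (y ^ (1 / r)) x| ^ p / y ^ (p / r) = (min (|x| ^ r) y / y) ^ (p / r) := by
  have hmin : min |x| (y ^ (1 / r)) = (min (|x| ^ r) y) ^ (1 / r) := by
    rw [(Real.monotoneOn_rpow_Ici_of_exponent_nonneg (by positivity)).map_min
      (show 0 ≤ |x| ^ r by positivity) hy.le, one_div, Real.rpow_rpow_inv (abs_nonneg x) hr.ne']
  have hm : 0 ≤ min (|x| ^ r) y := by positivity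
  rw [abs_clamp (by positivity), hmin, ← Real.rpow_mul hm, one_div_mul_eq_div,
    Real.div_rpow hm hy.le]

lemma abs_clamp_rpow_div_le_one {y p r : ℝ} (hy : 0 < y) (hp : 0 ≤ p) (hr : 0 < r) (x : ℝ) :
    |clamp (y ^ (1 / r)) x| ^ p / y ^ (p / r) ≤ 1 := by
  rw [abs_clamp_rpow_div_eq hy hr]
  exact Real.rpow_le_one (by positivity) ((div_le_one hy).2 (min_le_right _ _)) (by positivity)

lemma le_abs_clamp_rpow_div_iff {y p r t : ℝ} (hy : 0 < y) (hp : 0 < p) (hr : 0 < r)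
    (ht : t ∈ Ioc 0 1) (x : ℝ) :
    t ≤ |clamp (y ^ (1 / r)) x| ^ p / y ^ (p / r) ↔ y * t ^ (r / p) ≤ |x| ^ r := by
  have hty : y * t ^ (r / p) ≤ y :=
    mul_le_of_le_one_right hy.le (Real.rpow_le_one ht.1.le ht.2 (by positivity))
  rw [abs_clamp_rpow_div_eq hy hr, ← Real.rpow_inv_le_iff_of_pos ht.1.le (by positivity)
    (by positivity), inv_div, le_div_iff₀' hy, le_min_iff, and_iff_left hty]

end Clamp

section Truncation

variable {Ω : Type*} [MeasurableSpace Ω] {𝒫₀ : Set (Measure Ω)} {X : Ω → ℝ} {C p r : ℝ}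

lemma upperProb_le_abs_rpow_le {Z : Ω → ℝ} (hr : 0 < r)
    (hdom : ∀ x, 0 ≤ x → upperProb 𝒫₀ {ω | x ≤ |Z ω|} ≤ C * upperProb 𝒫₀ {ω | x ≤ |X ω|})
    {s : ℝ} (hs : 0 ≤ s) :
    upperProb 𝒫₀ {ω | s ≤ |Z ω| ^ r} ≤ C * upperProb 𝒫₀ {ω | s ≤ |X ω| ^ r} := by
  simpa only [Real.rpow_inv_le_iff_of_pos hs (abs_nonneg _) hr] using hdom (s ^ r⁻¹) (by positivity)

lemma upperExp_abs_clamp_rpow_div_le (hprob : ∀ P ∈ 𝒫₀, IsProbabilityMeasure P) (hr : 0 < r)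
    (hp : 0 < p) {Z : Ω → ℝ} (hZ : Measurable Z)
    (hdom : ∀ x, 0 ≤ x → upperProb 𝒫₀ {ω | x ≤ |Z ω|} ≤ C * upperProb 𝒫₀ {ω | x ≤ |X ω|})
    {y : ℝ} (hy : 0 < y) :
    upperExp 𝒫₀ (fun ω ↦ |clamp (y ^ (1 / r)) (Z ω)| ^ p) / y ^ (p / r) ≤
      C * ∫ t in Ioc (0 : ℝ) 1, upperProb 𝒫₀ {ω | y * t ^ (r / p) ≤ |X ω| ^ r} := by
  have hmeas : Measurable fun ω ↦ |clamp (y ^ (1 / r)) (Z ω)| ^ p / y ^ (p / r) :=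
    ((((measurable_clamp _).comp hZ).abs).pow_const p).div_const _
  have hint (W : Ω → ℝ) :
      IntegrableOn (fun t : ℝ ↦ upperProb 𝒫₀ {ω | y * t ^ (r / p) ≤ |W ω| ^ r}) (Ioc 0 1) :=
    integrableOn_Ioc_antitone_comp_mul_rpow (antitone_upperProb_ge hprob _) hy.le (by positivity)
  calc upperExp 𝒫₀ (fun ω ↦ |clamp (y ^ (1 / r)) (Z ω)| ^ p) / y ^ (p / r)
      = upperExp 𝒫₀ fun ω ↦ |clamp (y ^ (1 / r)) (Z ω)| ^ p / y ^ (p / r) :=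
        (upperExp_div _ (by positivity)).symm
    _ ≤ ∫ t in Ioc (0 : ℝ) 1,
          upperProb 𝒫₀ {ω | t ≤ |clamp (y ^ (1 / r)) (Z ω)| ^ p / y ^ (p / r)} :=
        upperExp_le_integral_upperProb hprob hmeas (fun ω ↦ by positivity)
          fun ω ↦ abs_clamp_rpow_div_le_one hy hp.le hr _
    _ = ∫ t in Ioc (0 : ℝ) 1, upperProb 𝒫₀ {ω | y * t ^ (r / p) ≤ |Z ω| ^ r} :=
        setIntegral_congr_fun measurableSet_Ioc fun t ht ↦ by
          simp only [le_abs_clamp_rpow_div_iff hy hp hr ht]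
    _ ≤ ∫ t in Ioc (0 : ℝ) 1, C * upperProb 𝒫₀ {ω | y * t ^ (r / p) ≤ |X ω| ^ r} :=
        setIntegral_mono_on (hint Z) ((hint X).const_mul C) measurableSet_Ioc fun t ht ↦
          upperProb_le_abs_rpow_le hr hdom (mul_nonneg hy.le (Real.rpow_nonneg ht.1.le _))
    _ = C * ∫ t in Ioc (0 : ℝ) 1, upperProb 𝒫₀ {ω | y * t ^ (r / p) ≤ |X ω| ^ r} :=
        integral_const_mul _ _

lemma sum_upperExp_abs_clamp_rpow_div_le (hprob : ∀ P ∈ 𝒫₀, IsProbabilityMeasure P) (hr : 0 < r)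
    (hrp : r < p) (hCh : IntegrableOn (fun t ↦ upperProb 𝒫₀ {ω | t ≤ |X ω| ^ r}) (Ioi 0))
    (hC : 0 ≤ C) {Z : ℕ → Ω → ℝ} (hZ : ∀ n, Measurable (Z n))
    (hdom : ∀ x, 0 ≤ x → ∀ n,
      upperProb 𝒫₀ {ω | x ≤ |Z n ω|} ≤ C * upperProb 𝒫₀ {ω | x ≤ |X ω|}) (N : ℕ) :
    ∑ n ∈ Finset.range N,
        upperExp 𝒫₀ (fun ω ↦ |clamp (((n : ℝ) + 1) ^ (1 / r)) (Z n ω)| ^ p) /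
          ((n : ℝ) + 1) ^ (p / r) ≤
      p * C / (p - r) * choquetIntegral 𝒫₀ fun ω ↦ |X ω| ^ r := by
  have hp : 0 < p := hr.trans hrp
  calc _ ≤ ∑ n ∈ Finset.range N, C * ∫ t in Ioc (0 : ℝ) 1,
          upperProb 𝒫₀ {ω | ((n : ℝ) + 1) * t ^ (r / p) ≤ |X ω| ^ r} :=
        Finset.sum_le_sum fun n _ ↦ upperExp_abs_clamp_rpow_div_le hprob hr hp (hZ n)
          (fun x hx ↦ hdom x hx n) (by positivity)
    _ ≤ C * ((1 - r / p)⁻¹ * choquetIntegral 𝒫₀ fun ω ↦ |X ω| ^ r) := by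
        rw [← Finset.mul_sum]
        exact mul_le_mul_of_nonneg_left (sum_integral_antitone_comp_mul_rpow_le
          (antitone_upperProb_ge hprob _) (fun _ ↦ upperProb_nonneg _) hCh (by positivity)
          ((div_lt_one hp).2 hrp) N) hC
    _ = p * C / (p - r) * choquetIntegral 𝒫₀ fun ω ↦ |X ω| ^ r := by
        rw [one_sub_div hp.ne', inv_div]
        ring

end Truncation

lemma summable_and_tsum_le_of_sum_range_succ_le {a : ℕ → ℝ} {B : ℝ} (ha : ∀ j, 0 ≤ a j)
    (h : ∀ N, ∑ n ∈ Finset.range N, a (n + 1) ≤ B) :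
    Summable (fun j ↦ if 1 ≤ j then a j else 0) ∧ ∑' j, (if 1 ≤ j then a j else 0) ≤ B := by
  have hnonneg (j : ℕ) : 0 ≤ if 1 ≤ j then a j else 0 := by split_ifs <;> simp [ha]
  have hsum (N : ℕ) : ∑ j ∈ Finset.range N, (if 1 ≤ j then a j else 0) ≤ B := by
    refine le_trans ?_ (h N)
    refine (Finset.sum_le_sum_of_subset_of_nonneg (Finset.range_mono N.le_succ)
      fun j _ _ ↦ hnonneg j).trans_eq ?_
    simp [Finset.sum_range_succ']
  have hsummable := summable_of_sum_range_le hnonneg hsum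
  exact ⟨hsummable, hsummable.tsum_le_of_sum_range_le hsum⟩

theorem stmt8_general {Ω : Type*} [MeasurableSpace Ω] {𝒫₀ : Set (Measure Ω)}
    (hprob : ∀ P ∈ 𝒫₀, IsProbabilityMeasure P) {p r : ℝ} (hr : 0 < r) (hrp : r < p)
    {X : Ω → ℝ} (hCh : IntegrableOn (fun t ↦ upperProb 𝒫₀ {ω | t ≤ |X ω| ^ r}) (Ioi 0))
    {Xs : ℕ → Ω → ℝ} (hXs : ∀ j, Measurable (Xs j)) {C : ℝ} (hC : 0 ≤ C)
    (hdom : ∀ x, 0 ≤ x → ∀ j, 1 ≤ j →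
      upperProb 𝒫₀ {ω | x ≤ |Xs j ω|} ≤ C * upperProb 𝒫₀ {ω | x ≤ |X ω|}) :
    Summable (fun j : ℕ ↦ if 1 ≤ j then
        upperExp 𝒫₀ (fun ω ↦ |clamp ((j : ℝ) ^ (1 / r)) (Xs j ω)| ^ p) / (j : ℝ) ^ (p / r)
          else 0) ∧
      ∑' j : ℕ, (if 1 ≤ j then
        upperExp 𝒫₀ (fun ω ↦ |clamp ((j : ℝ) ^ (1 / r)) (Xs j ω)| ^ p) / (j : ℝ) ^ (p / r)
          else 0) ≤ p * C / (p - r) * choquetIntegral 𝒫₀ fun ω ↦ |X ω| ^ r := by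
  refine summable_and_tsum_le_of_sum_range_succ_le
    (fun j ↦ div_nonneg (upperExp_nonneg fun ω ↦ by positivity) (by positivity)) fun N ↦ ?_
  exact_mod_cast sum_upperExp_abs_clamp_rpow_div_le hprob hr hrp hCh hC (fun n ↦ hXs (n + 1))
    (fun x hx n ↦ hdom x hx (n + 1) n.succ_pos) N

lemma mul_div_two_sub_mul_le_add {r C S I : ℝ} (hr1 : 1 ≤ r) (hr2 : r < 2) (hC : 0 ≤ C)
    (hS : 0 ≤ S) (hI : 0 ≤ I) :
    2 * C / (2 - r) * I ≤ (1 + 4 * C) * S + 8 * r * C / (2 - r) * I := by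
  have hconst : 2 * C / (2 - r) ≤ 8 * r * C / (2 - r) :=
    div_le_div_of_nonneg_right (by nlinarith) (by linarith)
  exact le_add_of_nonneg_of_le (by positivity) (mul_le_mul_of_nonneg_right hconst hI)

theorem stmt8 {Ω : Type*} [MeasurableSpace Ω] (𝒫₀ : Set (Measure Ω)) (hne : 𝒫₀.Nonempty)
    (hP : ∀ P ∈ 𝒫₀, IsProbabilityMeasure P)
    (r : ℝ) (hr1 : 1 ≤ r) (hr2 : r < 2)
    (X : Ω → ℝ) (hX : Measurable X) (Xs : ℕ → Ω → ℝ) (hXs : ∀ j, Measurable (Xs j))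
    (hCh : IntegrableOn (fun t => ⨆ P ∈ 𝒫₀, (P {ω | t ≤ |X ω|^r}).toReal) (Set.Ioi 0))
    (C : ℝ) (hC : 0 < C)
    (hdom : ∀ x : ℝ, 0 ≤ x → ∀ j : ℕ, 1 ≤ j →
      (⨆ P ∈ 𝒫₀, (P {ω | x ≤ |Xs j ω|}).toReal) ≤ C * ⨆ P ∈ 𝒫₀, (P {ω | x ≤ |X ω|}).toReal)
    (Y : ℕ → Ω → ℝ)
    (hY : ∀ j ω, Y j ω = max (-((j:ℝ)^(1/r))) (min (Xs j ω) ((j:ℝ)^(1/r)))) :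
    Summable (fun j : ℕ => if 1 ≤ j then
        (⨆ P ∈ 𝒫₀, ∫ ω, (Y j ω)^2 ∂P) / (j:ℝ)^(2/r) else 0) ∧
    (∑' j : ℕ, if 1 ≤ j then (⨆ P ∈ 𝒫₀, ∫ ω, (Y j ω)^2 ∂P) / (j:ℝ)^(2/r) else 0)
      ≤ (1 + 4*C) * (∑' j : ℕ, if 1 ≤ j then (j:ℝ)^(-(2/r)) else 0)
        + (8*r*C/(2-r)) * ∫ t in Set.Ioi (0:ℝ), ⨆ P ∈ 𝒫₀, (P {ω | t ≤ |X ω|^r}).toReal := by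
  obtain rfl : Y = fun (j : ℕ) ω ↦ clamp ((j : ℝ) ^ (1 / r)) (Xs j ω) := funext₂ hY
  have hgen := stmt8_general hP (by linarith) hr2 hCh hXs hC.le hdom
  simp only [Real.rpow_two, sq_abs] at hgen
  exact hgen.imp_right (·.trans <| mul_div_two_sub_mul_le_add hr1 hr2 hC.le
    (tsum_nonneg fun j ↦ by split_ifs <;> positivity) (choquetIntegral_nonneg _))
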